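/- (Theorem 1, unanimous acceptance group rule.) In the two-group voting model, for i ∈ {1,2} and every j ∈ S_i, the expected one-step actual capital increment under the rule that a proposal is accepted iff it is supported by both groups satisfies E[X_j·1_{G₁ ∩ G₂}] = (μ·F_i + σ_i·f_i)·F_{3−i}. -/

import Mathlib

open MeasureTheory ProbabilityTheory Real Set

/-- Density of the standard normal distribution. -/
noncomputable def stdPdf (y : ℝ) : ℝ := (Real.sqrt (2 * Real.pi))⁻¹ * Real.exp (-(y ^ 2) / 2)

/-- Cumulative distribution function of the standard normal distribution. -/
noncomputable def stdCdf (y : ℝ) : ℝ := ∫ x in Set.Iic y, stdPdf x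

/-!
Within a group the variables are exchangeable, so on the event that the group mean `A_i` exceeds
`t_i` every `X_j` has the same expectation, namely that of `A_i` itself. Since `A_i` is
`N(μ, σ_i²)`, this is a truncated normal moment: the derivative of the `N(m, v)` density `p` is
`-(x - m) / v * p x`, so `E[(A - m)·1_{A > t}] = v * p t` for `A` with density `p`. The support of
the other group is an independent event and contributes the factor `F_{3-i}`.
-/

open scoped NNReal Finset

section NormalTail

lemma gaussianPDFReal_zero_one : gaussianPDFReal 0 1 = stdPdf := by
  ext x
  simp [gaussianPDFReal, stdPdf]

lemma gaussianPDFReal_eq_stdPdf_div (m x : ℝ) {s : ℝ} (hs : 0 < s) :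
    gaussianPDFReal m (s ^ 2).toNNReal x = stdPdf ((m - x) / s) / s := by
  have hsqrt : √(2 * π * s ^ 2) = √(2 * π) * s := by
    rw [Real.sqrt_mul (by positivity), Real.sqrt_sq hs.le]
  have hexp : -(x - m) ^ 2 / (2 * s ^ 2) = -((m - x) / s) ^ 2 / 2 := by
    field_simp
    ring
  rw [gaussianPDFReal_def, Real.coe_toNNReal _ (sq_nonneg s)]
  simp only [stdPdf]
  rw [hsqrt, hexp, mul_inv]
  ring

lemma hasDerivAt_gaussianPDFReal (m : ℝ) (v : ℝ≥0) (x : ℝ) :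
    HasDerivAt (gaussianPDFReal m v) (-((x - m) / v) * gaussianPDFReal m v x) x := by
  have hexponent : HasDerivAt (fun y : ℝ => -(y - m) ^ 2 / (2 * v)) (-((x - m) / v)) x := by
    refine ((((hasDerivAt_id x).sub_const m).pow 2).neg.div_const (2 * (v : ℝ))).congr_deriv ?_
    simp only [id, Nat.cast_ofNat]
    ring
  refine (hexponent.exp.const_mul (√(2 * π * v))⁻¹).congr_deriv ?_
  rw [gaussianPDFReal_def]
  ring

lemma integrable_gaussianPDFReal_mul_sub (m : ℝ) {v : ℝ≥0} (hv : v ≠ 0) :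
    Integrable fun x => gaussianPDFReal m v x * (x - m) := by
  have h : Integrable (fun x => x - m) (gaussianReal m v) :=
    IsGaussian.integrable_fun_id.sub (integrable_const m)
  rw [gaussianReal_of_var_ne_zero m hv, integrable_withDensity_iff_integrable_smul'
    (measurable_gaussianPDF m v) (ae_of_all _ fun _ => gaussianPDF_lt_top)] at h
  simpa only [toReal_gaussianPDF, smul_eq_mul] using h

lemma setIntegral_Ioi_sub_gaussianReal (m : ℝ) (v : ℝ≥0) (t : ℝ) :
    ∫ x in Ioi t, (x - m) ∂gaussianReal m v = v * gaussianPDFReal m v t := by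
  rcases eq_or_ne v 0 with rfl | hv
  · simp [gaussianReal_zero_var, setIntegral_dirac]
  have hderiv (x : ℝ) : HasDerivAt (fun y => -(v * gaussianPDFReal m v y))
      (gaussianPDFReal m v x * (x - m)) x := by
    refine ((hasDerivAt_gaussianPDFReal m v x).const_mul (v : ℝ)).neg.congr_deriv ?_
    field_simp
  have hint := (integrable_gaussianPDFReal_mul_sub m hv).integrableOn (s := Ioi t)
  have hlim := tendsto_zero_of_hasDerivAt_of_integrableOn_Ioi (fun x _ => hderiv x) hint
    ((integrable_gaussianPDFReal m v).const_mul (v : ℝ)).neg.integrableOn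
  calc ∫ x in Ioi t, (x - m) ∂gaussianReal m v
      = ∫ x in Ioi t, gaussianPDFReal m v x * (x - m) := by
        rw [← integral_indicator measurableSet_Ioi, integral_gaussianReal_eq_integral_smul hv,
          ← integral_indicator measurableSet_Ioi]
        simp only [smul_eq_mul, indicator_mul_right]
    _ = v * gaussianPDFReal m v t := by
        rw [integral_Ioi_of_hasDerivAt_of_tendsto' (fun x _ => hderiv x) hint hlim]
        ring

lemma stdCdf_eq_gaussianReal_real_Iio (y : ℝ) : stdCdf y = (gaussianReal 0 1).real (Iio y) := by
  rw [measureReal_def, gaussianReal_apply_eq_integral 0 one_ne_zero, gaussianPDFReal_zero_one,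
    ENNReal.toReal_ofReal, stdCdf, integral_Iic_eq_integral_Iio]
  exact integral_nonneg fun x => gaussianPDFReal_zero_one ▸ gaussianPDFReal_nonneg 0 1 x

lemma gaussianReal_real_Ioi (m t : ℝ) {s : ℝ} (hs : 0 < s) :
    (gaussianReal m (s ^ 2).toNNReal).real (Ioi t) = stdCdf ((m - t) / s) := by
  -- The reflection `x ↦ m - s * x` carries the lower tail of `N(0, 1)` to the upper tail.
  have hlaw : HasLaw (fun x => m - s * x) (gaussianReal m (s ^ 2).toNNReal) (gaussianReal 0 1) := by
    have h := gaussianReal_const_sub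
      (gaussianReal_const_mul (HasLaw.id (μ := gaussianReal 0 1)) s) m
    simpa [Real.toNNReal_of_nonneg (sq_nonneg s)] using h
  have hpreimage : (fun x => m - s * x) ⁻¹' Ioi t = Iio ((m - t) / s) := by
    ext x
    rw [mem_preimage, mem_Ioi, mem_Iio, lt_div_iff₀ hs, lt_sub_comm, mul_comm]
  rw [← hlaw.map_eq, map_measureReal_apply (by fun_prop) measurableSet_Ioi, hpreimage,
    stdCdf_eq_gaussianReal_real_Iio]

lemma setIntegral_Ioi_id_gaussianReal (m t : ℝ) {s : ℝ} (hs : 0 < s) :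
    ∫ x in Ioi t, x ∂gaussianReal m (s ^ 2).toNNReal =
      m * stdCdf ((m - t) / s) + s * stdPdf ((m - t) / s) := by
  have hcentred := setIntegral_Ioi_sub_gaussianReal m (s ^ 2).toNNReal t
  rw [integral_sub IsGaussian.integrable_fun_id.integrableOn (integrable_const m).integrableOn,
    setIntegral_const, gaussianReal_real_Ioi m t hs, gaussianPDFReal_eq_stdPdf_div m t hs,
    Real.coe_toNNReal _ (sq_nonneg s), smul_eq_mul] at hcentred
  rw [sub_eq_iff_eq_add.1 hcentred]
  field_simp
  ring

end NormalTail

section Exchangeability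

variable {Ω ι : Type*} {mΩ : MeasurableSpace Ω} {P : Measure Ω}

lemma identDistrib_comp_perm {E : Type*} [MeasurableSpace E] [Countable ι] {X : ι → Ω → E}
    (hindep : iIndepFun X P) (hident : ∀ i j, IdentDistrib (X i) (X j) P P) (τ : Equiv.Perm ι) :
    IdentDistrib (fun ω k => X k ω) (fun ω k => X (τ k) ω) P P :=
  IdentDistrib.pi (fun k => hident k (τ k)) hindep (hindep.precomp τ.injective)

lemma identDistrib_prodMk_sum {E : Type*} [AddCommMonoid E] [MeasurableSpace E]
    [MeasurableAdd₂ E] {X : ι → Ω → E} (hindep : iIndepFun X P) {S : Finset ι}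
    (hident : ∀ i ∈ S, ∀ j ∈ S, IdentDistrib (X i) (X j) P P) {i j : ι} (hi : i ∈ S)
    (hj : j ∈ S) :
    IdentDistrib (fun ω => (X i ω, ∑ k ∈ S, X k ω)) (fun ω => (X j ω, ∑ k ∈ S, X k ω)) P P := by
  classical
  let τ : Equiv.Perm S := Equiv.swap ⟨i, hi⟩ ⟨j, hj⟩
  have hperm := identDistrib_comp_perm (X := fun k : S => X k)
    (hindep.precomp Subtype.val_injective) (fun k l => hident k k.2 l l.2) τ
  have hpair := hperm.comp (u := fun x : S → E => (x ⟨i, hi⟩, ∑ k, x k)) (by fun_prop)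
  have hsum (ω : Ω) : ∑ k : S, X k ω = ∑ k ∈ S, X k ω := Finset.sum_coe_sort S fun k => X k ω
  have hsum_perm (ω : Ω) : ∑ k : S, X (τ k) ω = ∑ k ∈ S, X k ω :=
    (Equiv.sum_comp τ fun k : S => X k ω).trans (hsum ω)
  simpa only [Function.comp_def, hsum, hsum_perm, τ, Equiv.swap_apply_left] using hpair

lemma setIntegral_preimage_eq_of_identDistrib_prodMk {E α : Type*} [NormedAddCommGroup E]
    [NormedSpace ℝ E] [MeasurableSpace E] [BorelSpace E] [MeasurableSpace α] {Ω' : Type*}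
    {mΩ' : MeasurableSpace Ω'} {Q : Measure Ω'} {X : Ω → E} {Y : Ω' → E} {Z : Ω → α} {W : Ω' → α}
    (hZ : Measurable Z) (hW : Measurable W)
    (h : IdentDistrib (fun ω => (X ω, Z ω)) (fun ω => (Y ω, W ω)) P Q) {B : Set α}
    (hB : MeasurableSet B) :
    ∫ ω in Z ⁻¹' B, X ω ∂P = ∫ ω in W ⁻¹' B, Y ω ∂Q := by
  have hident := h.comp (u := (Prod.snd ⁻¹' B).indicator Prod.fst)
    (measurable_fst.indicator (measurable_snd hB))
  rw [← integral_indicator (hZ hB), ← integral_indicator (hW hB)]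
  exact hident.integral_eq

end Exchangeability

/-- The mean capital increment `A = (1/#S)·∑_{j ∈ S} X_j` of a group `S`, which supports a proposal
when `A` exceeds its threshold. The empty group has mean `0`. -/
noncomputable def groupMean {Ω ι : Type*} (X : ι → Ω → ℝ) (S : Finset ι) (ω : Ω) : ℝ :=
  (#S : ℝ)⁻¹ * ∑ j ∈ S, X j ω

section GroupMean

variable {Ω ι : Type*} {mΩ : MeasurableSpace Ω} {P : Measure Ω} {X : ι → Ω → ℝ}

lemma measurable_groupMean (hX : ∀ j, Measurable (X j)) (S : Finset ι) :
    Measurable (groupMean X S) := by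
  unfold groupMean
  fun_prop

lemma setIntegral_eq_setIntegral_groupMean (hX : ∀ j, Measurable (X j)) (hindep : iIndepFun X P)
    {S : Finset ι} (hident : ∀ i ∈ S, ∀ j ∈ S, IdentDistrib (X i) (X j) P P)
    (hint : ∀ i ∈ S, Integrable (X i) P) {B : Set ℝ} (hB : MeasurableSet B) {j : ι} (hj : j ∈ S) :
    ∫ ω in groupMean X S ⁻¹' B, X j ω ∂P =
      ∫ ω in groupMean X S ⁻¹' B, groupMean X S ω ∂P := by
  have hcard : (#S : ℝ) ≠ 0 := Nat.cast_ne_zero.2 (Finset.card_ne_zero_of_mem hj)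
  have hmean := measurable_groupMean hX S
  have hexchange (i : ι) (hi : i ∈ S) :
      ∫ ω in groupMean X S ⁻¹' B, X i ω ∂P = ∫ ω in groupMean X S ⁻¹' B, X j ω ∂P :=
    setIntegral_preimage_eq_of_identDistrib_prodMk hmean hmean
      ((identDistrib_prodMk_sum hindep hident hi hj).comp
        (u := fun p => (p.1, (#S : ℝ)⁻¹ * p.2)) (by fun_prop)) hB
  calc ∫ ω in groupMean X S ⁻¹' B, X j ω ∂P
      = (#S : ℝ)⁻¹ * ∑ i ∈ S, ∫ ω in groupMean X S ⁻¹' B, X i ω ∂P := by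
        rw [Finset.sum_congr rfl hexchange, Finset.sum_const, nsmul_eq_mul,
          inv_mul_cancel_left₀ hcard]
    _ = ∫ ω in groupMean X S ⁻¹' B, groupMean X S ω ∂P := by
        rw [← integral_finsetSum S fun i hi => (hint i hi).integrableOn, ← integral_const_mul]
        rfl

lemma indepFun_prodMk_groupMean (hX : ∀ j, Measurable (X j)) (hindep : iIndepFun X P)
    {S T : Finset ι} (hST : Disjoint S T) {j : ι} (hj : j ∈ S) :
    IndepFun (fun ω => (X j ω, groupMean X S ω)) (groupMean X T) P := by
  have h := (hindep.indepFun_finset S T hST hX).comp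
    (φ := fun x : S → ℝ => (x ⟨j, hj⟩, (#S : ℝ)⁻¹ * ∑ k, x k))
    (ψ := fun x : T → ℝ => (#T : ℝ)⁻¹ * ∑ k, x k) (by fun_prop) (by fun_prop)
  have hmean (R : Finset ι) : (fun ω => (#R : ℝ)⁻¹ * ∑ k : R, X k ω) = groupMean X R := by
    ext ω
    rw [groupMean, Finset.sum_coe_sort R fun k => X k ω]
  rw [← hmean T]
  simpa only [Function.comp_def, ← hmean S] using h

lemma setIntegral_groupMean_inter (hX : ∀ j, Measurable (X j)) (hindep : iIndepFun X P)
    {S T : Finset ι} (hST : Disjoint S T) {B C : Set ℝ} (hB : MeasurableSet B)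
    (hC : MeasurableSet C) {j : ι} (hj : j ∈ S) :
    ∫ ω in groupMean X S ⁻¹' B ∩ groupMean X T ⁻¹' C, X j ω ∂P =
      (∫ ω in groupMean X S ⁻¹' B, X j ω ∂P) * P.real (groupMean X T ⁻¹' C) := by
  have hmeanS := measurable_groupMean hX S
  have hmeanT := measurable_groupMean hX T
  have h := ((IndepFun_iff_Indep _ _ _).1 (indepFun_prodMk_groupMean hX hindep hST hj)).symm
    |>.setIntegral_eq_mul hmeanT.comap_le (f := (Prod.snd ⁻¹' B).indicator Prod.fst)
      ((hX j).prodMk hmeanS).aemeasurable ⟨C, hC, rfl⟩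
      (measurable_fst.indicator (measurable_snd hB)).aestronglyMeasurable
  rw [inter_comm, ← setIntegral_indicator (hmeanS hB), ← integral_indicator (hmeanS hB), mul_comm]
  exact h

lemma hasLaw_sum_gaussianReal (hX : ∀ j, AEMeasurable (X j) P) (hindep : iIndepFun X P)
    {m : ι → ℝ} {v : ι → ℝ≥0} {S : Finset ι}
    (hlaw : ∀ j ∈ S, HasLaw (X j) (gaussianReal (m j) (v j)) P) :
    HasLaw (∑ j ∈ S, X j) (gaussianReal (∑ j ∈ S, m j) (∑ j ∈ S, v j)) P := by
  classical
  have := hindep.isProbabilityMeasure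
  induction S using Finset.induction_on with
  | empty =>
    simp only [Finset.sum_empty, gaussianReal_zero_var]
    exact hasLaw_dirac_of_ae_eq .rfl
  | insert a S ha ih =>
    rw [Finset.forall_mem_insert] at hlaw
    simp only [Finset.sum_insert ha]
    exact ⟨by fun_prop, gaussianReal_add_gaussianReal_of_indepFun
      (hindep.indepFun_finsetSum_of_notMem₀ hX ha).symm hlaw.1.map_eq (ih hlaw.2).map_eq⟩

lemma hasLaw_groupMean_gaussianReal (hX : ∀ j, AEMeasurable (X j) P) (hindep : iIndepFun X P)
    {m s : ℝ} {S : Finset ι}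
    (hlaw : ∀ j ∈ S, HasLaw (X j) (gaussianReal m (s ^ 2).toNNReal) P) (hS : S.Nonempty) :
    HasLaw (groupMean X S) (gaussianReal m ((s / √(#S)) ^ 2).toNNReal) P := by
  have hcard : (#S : ℝ) ≠ 0 := Nat.cast_ne_zero.2 hS.card_ne_zero
  have h := gaussianReal_const_mul (hasLaw_sum_gaussianReal hX hindep hlaw) (#S : ℝ)⁻¹
  have hmean : (#S : ℝ)⁻¹ * ∑ _j ∈ S, m = m := by
    rw [Finset.sum_const, nsmul_eq_mul, inv_mul_cancel_left₀ hcard]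
  have hvar : .mk ((#S : ℝ)⁻¹ ^ 2) (sq_nonneg _) * ∑ _j ∈ S, (s ^ 2).toNNReal =
      ((s / √(#S)) ^ 2).toNNReal := by
    ext
    rw [Finset.sum_const, nsmul_eq_mul, NNReal.coe_mul, NNReal.coe_mul, NNReal.coe_mk,
      NNReal.coe_natCast, Real.coe_toNNReal _ (sq_nonneg _), Real.coe_toNNReal _ (sq_nonneg _),
      div_pow, Real.sq_sqrt (Nat.cast_nonneg _)]
    field_simp
  rw [hmean, hvar] at h
  simp only [Finset.sum_apply] at h
  exact h

lemma setIntegral_groupMean_gt (hX : ∀ j, Measurable (X j)) (hindep : iIndepFun X P) {m s : ℝ}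
    (hs : 0 < s) {S : Finset ι}
    (hlaw : ∀ j ∈ S, HasLaw (X j) (gaussianReal m (s ^ 2).toNNReal) P) (t : ℝ) {j : ι}
    (hj : j ∈ S) :
    ∫ ω in {ω | t < groupMean X S ω}, X j ω ∂P =
      m * stdCdf ((m - t) / (s / √(#S))) + s / √(#S) * stdPdf ((m - t) / (s / √(#S))) := by
  have hS : S.Nonempty := ⟨j, hj⟩
  have hsd : 0 < s / √(#S) := div_pos hs (Real.sqrt_pos.2 (Nat.cast_pos.2 hS.card_pos))
  have hmean := hasLaw_groupMean_gaussianReal (fun j => (hX j).aemeasurable) hindep hlaw hS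
  calc ∫ ω in {ω | t < groupMean X S ω}, X j ω ∂P
      = ∫ ω in groupMean X S ⁻¹' Ioi t, groupMean X S ω ∂P :=
        setIntegral_eq_setIntegral_groupMean hX hindep
          (fun i hi k hk => (hlaw i hi).identDistrib (hlaw k hk))
          (fun i hi => (hlaw i hi).hasGaussianLaw.integrable) measurableSet_Ioi hj
    _ = ∫ x in Ioi t, x ∂gaussianReal m ((s / √(#S)) ^ 2).toNNReal := by
        rw [← hmean.map_eq, setIntegral_map measurableSet_Ioi (by fun_prop) hmean.aemeasurable]
    _ = _ := setIntegral_Ioi_id_gaussianReal m t hsd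

lemma measureReal_groupMean_gt (hX : ∀ j, AEMeasurable (X j) P) (hindep : iIndepFun X P)
    {m s : ℝ} (hs : 0 < s) {S : Finset ι}
    (hlaw : ∀ j ∈ S, HasLaw (X j) (gaussianReal m (s ^ 2).toNNReal) P) (hS : S.Nonempty)
    (t : ℝ) :
    P.real {ω | t < groupMean X S ω} = stdCdf ((m - t) / (s / √(#S))) := by
  have hsd : 0 < s / √(#S) := div_pos hs (Real.sqrt_pos.2 (Nat.cast_pos.2 hS.card_pos))
  rw [← gaussianReal_real_Ioi m t hsd]
  exact (hasLaw_groupMean_gaussianReal hX hindep hlaw hS).measureReal_eq measurableSet_Ioi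

end GroupMean

theorem expected_increment_unanimous_acceptance_general {Ω ι : Type*} {mΩ : MeasurableSpace Ω}
    {P : Measure Ω} {X : ι → Ω → ℝ} (hX : ∀ j, Measurable (X j)) (hindep : iIndepFun X P)
    {m₁ m₂ s₁ s₂ : ℝ} (hs₁ : 0 < s₁) (hs₂ : 0 < s₂) {S₁ S₂ : Finset ι}
    (hlaw₁ : ∀ j ∈ S₁, HasLaw (X j) (gaussianReal m₁ (s₁ ^ 2).toNNReal) P)
    (hlaw₂ : ∀ j ∈ S₂, HasLaw (X j) (gaussianReal m₂ (s₂ ^ 2).toNNReal) P)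
    (hdisj : Disjoint S₁ S₂) (hS₂ : S₂.Nonempty) (t₁ t₂ : ℝ) {j : ι} (hj : j ∈ S₁) :
    ∫ ω in {ω | t₁ < groupMean X S₁ ω} ∩ {ω | t₂ < groupMean X S₂ ω}, X j ω ∂P =
      (m₁ * stdCdf ((m₁ - t₁) / (s₁ / √(#S₁))) +
        s₁ / √(#S₁) * stdPdf ((m₁ - t₁) / (s₁ / √(#S₁)))) *
        stdCdf ((m₂ - t₂) / (s₂ / √(#S₂))) := by
  rw [← setIntegral_groupMean_gt hX hindep hs₁ hlaw₁ t₁ hj,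
    ← measureReal_groupMean_gt (fun j => (hX j).aemeasurable) hindep hs₂ hlaw₂ hS₂ t₂]
  exact setIntegral_groupMean_inter hX hindep hdisj measurableSet_Ioi measurableSet_Ioi hj

/-- Theorem 1, unanimous acceptance group rule: for `i ∈ {1,2}` and every `j ∈ S_i`,
`E[X_j·1_{G₁ ∩ G₂}] = (μ·F_i + σ_i·f_i)·F_{3−i}`. -/
theorem expected_increment_unanimous_acceptance
    {Ω ι : Type*} [MeasureSpace Ω] [IsProbabilityMeasure (ℙ : Measure Ω)]
    (μ σ : ℝ) (hσ : 0 < σ)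
    (X : ι → Ω → ℝ) (hmeas : ∀ j, Measurable (X j))
    (hindep : iIndepFun X ℙ)
    (hdist : ∀ j, Measure.map (X j) ℙ = gaussianReal μ ((σ ^ 2).toNNReal))
    (S₁ S₂ : Finset ι) (hdisj : Disjoint S₁ S₂)
    (g₁ g₂ : ℕ) (hcard₁ : S₁.card = g₁) (hcard₂ : S₂.card = g₂)
    (hg₁ : 1 ≤ g₁) (hg₂ : 1 ≤ g₂)
    (t₁ t₂ : ℝ)
    (A₁ A₂ : Ω → ℝ)
    (hA₁ : A₁ = fun ω => (g₁ : ℝ)⁻¹ * ∑ j ∈ S₁, X j ω)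
    (hA₂ : A₂ = fun ω => (g₂ : ℝ)⁻¹ * ∑ j ∈ S₂, X j ω)
    :
    (∀ j ∈ S₁, ∫ ω in {ω | t₁ < A₁ ω} ∩ {ω | t₂ < A₂ ω}, X j ω =
      (μ * stdCdf ((μ - t₁) / (σ / Real.sqrt g₁)) + (σ / Real.sqrt g₁) * stdPdf ((μ - t₁) / (σ / Real.sqrt g₁))) * stdCdf ((μ - t₂) / (σ / Real.sqrt g₂))) ∧
    (∀ j ∈ S₂, ∫ ω in {ω | t₁ < A₁ ω} ∩ {ω | t₂ < A₂ ω}, X j ω =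
      (μ * stdCdf ((μ - t₂) / (σ / Real.sqrt g₂)) + (σ / Real.sqrt g₂) * stdPdf ((μ - t₂) / (σ / Real.sqrt g₂))) * stdCdf ((μ - t₁) / (σ / Real.sqrt g₁))) := by
  subst hcard₁ hcard₂ hA₁ hA₂
  have hlaw (j : ι) : HasLaw (X j) (gaussianReal μ (σ ^ 2).toNNReal) ℙ :=
    ⟨(hmeas j).aemeasurable, hdist j⟩
  refine ⟨fun j hj => ?_, fun j hj => ?_⟩
  · exact expected_increment_unanimous_acceptance_general hmeas hindep hσ hσ
      (fun k _ => hlaw k) (fun k _ => hlaw k) hdisj (Finset.card_pos.1 hg₂) t₁ t₂ hj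
  · rw [inter_comm]
    exact expected_increment_unanimous_acceptance_general hmeas hindep hσ hσ
      (fun k _ => hlaw k) (fun k _ => hlaw k) hdisj.symm (Finset.card_pos.1 hg₁) t₂ t₁ hj
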